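/- Let A be a Gorenstein commutative Noetherian local ring of Krull dimension d and let N be a nonzero finitely generated A-module. Then Ext^v_A(N, A) = 0 for every natural number v with v < d − dim N. -/

import Mathlib

/-!
STATEMENT 10: Let A be a Gorenstein commutative Noetherian local ring of Krull dimension d
and let N be a nonzero finitely generated A-module. Then Ext^v_A(N, A) = 0 for every
natural number v with v < d − dim N  (equivalently, v + dim N < d), where
dim N = Krull dimension of A / Ann_A(N).
-/

open CategoryTheory Opposite

noncomputable section

universe u

/-- The `t`-th Ext group `Ext_A^t(N, A)`, as an `A`-module. -/
abbrev extPow (A : Type u) [CommRing A] (N : Type u) [AddCommGroup N] [Module A N]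
    (t : ℕ) : ModuleCat.{u} A :=
  ((_root_.Ext.{u} A (ModuleCat.{u} A) t).obj (op (ModuleCat.of A N))).obj (ModuleCat.of A A)

/-- `A` has finite injective dimension as a module over itself. -/
def HasFiniteSelfInjDim (A : Type u) [CommRing A] : Prop :=
  ∃ n : ℕ, ∀ (M : ModuleCat.{u} A) (i : ℕ), n < i →
    Subsingleton (((_root_.Ext.{u} A (ModuleCat.{u} A) i).obj (op M)).obj (ModuleCat.of A A))

/-!
Finite injective dimension makes `A` Cohen-Macaulay. Let `x` be an `A`-regular sequence of maximal
length `r`. The residue field embeds in `A/(x)`, whose projective dimension is `r`, so descending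
induction from the injective dimension of `A` gives `Ext^i(N, A) = 0` for all finitely generated
`N` and all `i > r`. If a non-maximal prime `p` contained `x`, Nakayama would turn the vanishing of
`Ext^(r+1)(-, A)` into that of `Ext^r(A/p, A)`, and Rees' theorem would then give a regular sequence
of length `r + 1` in `p`. Hence `A/(x)` is zero-dimensional and `r = dim A`.

The vanishing below `dim A - dim N` is Ischebeck's theorem. Filtering `N` by quotients `A/p` reduces
`Ext^n(N, A) = 0` to the residue field, which is Rees' theorem, and to `N = A/p` with `p` not
maximal: for `y` in the maximal ideal but not in `p`, Nakayama reduces `Ext^n(A/p, A) = 0` to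
`Ext^(n+1)(A/(p + (y)), A) = 0`, where the dimension has dropped by one.
-/

universe v w w'

section Comparison

variable {R : Type v} [Ring R] {C : Type w} [Category.{v} C] [Abelian C] [Linear R C]
  [EnoughProjectives C] (X Y : C)

variable (R) in
theorem subsingleton_derivedExt_zero_iff :
    Subsingleton (((_root_.Ext R C 0).obj (op X)).obj Y) ↔ Subsingleton (X ⟶ Y) := by
  let P := projectiveResolution X
  rw [← ModuleCat.isZero_iff_subsingleton, (P.isoExt (R := R) 0 Y).isZero_iff,
    ← HomologicalComplex.exactAt_iff_isZero_homology,
    HomologicalComplex.exactAt_iff' _ 0 0 1 (by simp) (by simp), ShortComplex.moduleCat_exact_iff]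
  constructor
  · intro h
    refine subsingleton_of_forall_eq 0 fun u ↦ ?_
    have hu : P.complex.d 1 0 ≫ P.π.f 0 ≫ u = 0 :=
      (P.complex_d_comp_π_f_zero_assoc u).trans Limits.zero_comp
    obtain ⟨(g : P.complex.X 0 ⟶ Y), hg⟩ := h (P.π.f 0 ≫ u : P.complex.X 0 ⟶ Y) hu
    have d_comp : P.complex.d 0 0 ≫ g = P.π.f 0 ≫ u := hg
    rw [P.complex.shape 0 0 (by simp), Limits.zero_comp] at d_comp
    exact (cancel_epi (P.π.f 0)).1 (d_comp.symm.trans Limits.comp_zero.symm)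
  · intro h (f : P.complex.X 0 ⟶ Y) (hf : P.complex.d 1 0 ≫ f = 0)
    have desc_eq_zero : P.exact₀.desc f hf = 0 := Subsingleton.elim (α := X ⟶ Y) _ _
    have hf0 : f = 0 := by rw [← P.exact₀.g_desc f hf, desc_eq_zero, Limits.comp_zero]
    exact ⟨0, (map_zero _).trans hf0.symm⟩

variable (R) in
theorem subsingleton_derivedExt_succ_iff [HasExt.{w'} C] (n : ℕ) :
    Subsingleton (((_root_.Ext R C (n + 1)).obj (op X)).obj Y) ↔
      Subsingleton (Abelian.Ext.{w'} X Y (n + 1)) := by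
  let P := projectiveResolution X
  rw [← ModuleCat.isZero_iff_subsingleton, (P.isoExt (R := R) (n + 1) Y).isZero_iff,
    ← HomologicalComplex.exactAt_iff_isZero_homology,
    HomologicalComplex.exactAt_iff' _ n (n + 1) (n + 2) (by simp) (by simp),
    ShortComplex.moduleCat_exact_iff]
  constructor
  · refine fun h ↦ subsingleton_of_forall_eq 0 fun y ↦ ?_
    obtain ⟨f, hf, rfl⟩ := P.extMk_surjective y (n + 2) rfl
    exact (P.extMk_eq_zero_iff f _ _ hf n rfl).2 (h f hf)
  · exact fun h f hf ↦ (P.extMk_eq_zero_iff f (n + 2) rfl hf n rfl).1 (Subsingleton.elim _ _)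

variable (R) in
theorem subsingleton_derivedExt_iff [HasExt.{w'} C] (n : ℕ) :
    Subsingleton (((_root_.Ext R C n).obj (op X)).obj Y) ↔
      Subsingleton (Abelian.Ext.{w'} X Y n) := by
  cases n with
  | zero =>
    rw [subsingleton_derivedExt_zero_iff, Abelian.Ext.addEquiv₀.subsingleton_congr]
  | succ n => exact subsingleton_derivedExt_succ_iff R X Y n

end Comparison

section ShortExact

variable {C : Type v} [Category.{w} C] [Abelian C] [HasExt.{w'} C]

open Abelian

theorem subsingleton_ext_of_isZero {X : C} (hX : Limits.IsZero X) (Y : C) (n : ℕ) :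
    Subsingleton (Ext.{w'} X Y n) :=
  have := hX.hasProjectiveDimensionLT_zero
  HasProjectiveDimensionLT.subsingleton X 0 n n.zero_le Y

variable {S : ShortComplex C} {Y : C} {n : ℕ}

theorem subsingleton_ext_X₁ (hS : S.ShortExact)
    (h₂ : Subsingleton (Ext.{w'} S.X₂ Y n)) (h₃ : Subsingleton (Ext.{w'} S.X₃ Y (n + 1))) :
    Subsingleton (Ext.{w'} S.X₁ Y n) := by
  refine subsingleton_of_forall_eq 0 fun y ↦ ?_
  obtain ⟨z, rfl⟩ :=
    Ext.contravariant_sequence_exact₁ hS Y y (add_comm 1 n) (Subsingleton.elim _ _)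
  rw [Subsingleton.elim z 0, Ext.comp_zero]

theorem subsingleton_ext_X₂ (hS : S.ShortExact)
    (h₁ : Subsingleton (Ext.{w'} S.X₁ Y n)) (h₃ : Subsingleton (Ext.{w'} S.X₃ Y n)) :
    Subsingleton (Ext.{w'} S.X₂ Y n) := by
  refine subsingleton_of_forall_eq 0 fun y ↦ ?_
  obtain ⟨z, rfl⟩ := Ext.contravariant_sequence_exact₂ hS Y y (Subsingleton.elim _ _)
  rw [Subsingleton.elim z 0, Ext.comp_zero]

end ShortExact

theorem supportDim_nonneg (R : Type v) (M : Type w) [CommRing R] [AddCommGroup M] [Module R M]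
    [Nontrivial M] : 0 ≤ Module.supportDim R M :=
  have : Nonempty (Module.support R M) := Module.nonempty_support_of_nontrivial.to_subtype
  Order.krullDim_nonneg

open Abelian IsLocalRing RingTheory.Sequence

section CommRing

variable {A : Type v} [CommRing A]

theorem isSMulRegular_quotient_of_notMem {p : Ideal A} [p.IsPrime] {x : A} (hx : x ∉ p) :
    IsSMulRegular (A ⧸ p) x :=
  (isSMulRegular_quotient_iff_mem_of_smul_mem p x).2 fun _ hy ↦
    (Ideal.IsPrime.mem_or_mem ‹_› hy).resolve_left hx

variable [IsNoetherianRing A] [Small.{w} A] {N M : ModuleCat.{w} A} [Module.Finite A N]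
  [Module.Finite A M]

theorem subsingleton_ext_of_quotSMulTop {x : A} (reg : IsSMulRegular N x)
    (hx : x ∈ (⊥ : Ideal A).jacobson) {n : ℕ}
    (h : Subsingleton (Ext (ModuleCat.of A (QuotSMulTop x N)) M (n + 1))) :
    Subsingleton (Ext N M n) := by
  have smul_surjective (y : Ext N M n) : ∃ z : Ext N M n, x • z = y := by
    obtain ⟨z, hz⟩ := Ext.contravariant_sequence_exact₁ reg.smulShortComplex_shortExact M y
      (add_comm 1 n) (h.elim _ _)
    have smul_eq (w : Ext N M n) : (Ext.mk₀ (x • 𝟙 N)).comp w (zero_add n) = x • w := by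
      rw [Ext.mk₀_smul, Ext.smul_comp, Ext.mk₀_id_comp]
    exact ⟨z, (smul_eq z).symm.trans hz⟩
  by_contra! _
  refine Submodule.top_ne_pointwise_smul_of_mem_jacobson_annihilator (M := Ext N M n)
    (Ideal.jacobson_mono bot_le hx) (top_le_iff.1 fun y _ ↦ ?_).symm
  obtain ⟨z, rfl⟩ := smul_surjective y
  exact Submodule.smul_mem_pointwise_smul z x ⊤ trivial

theorem subsingleton_ext_of_ofList_le_annihilator {rs : List A} (reg : IsRegular M rs)
    (hN : Ideal.ofList rs ≤ Module.annihilator A N) {n : ℕ} (hn : n < rs.length) :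
    Subsingleton (Ext N M n) :=
  ModuleCat.subsingleton_ext_of_exists_isRegular (Ideal.ofList rs) N
    (Module.support_eq_zeroLocus.trans_subset (PrimeSpectrum.zeroLocus_anti_mono hN)) M
    reg.top_ne_smul.symm.lt_top rs (fun _ hr ↦ Ideal.subset_span hr) reg n hn

end CommRing

section IsLocalRing

variable {A : Type v} [CommRing A] [IsLocalRing A]

theorem annihilator_eq_maximalIdeal (K : Type w) [AddCommGroup K] [Module A K]
    [IsSimpleModule A K] : Module.annihilator A K = maximalIdeal A :=
  eq_maximalIdeal IsSimpleModule.annihilator_isMaximal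

theorem exists_mem_maximalIdeal_notMem {p : Ideal A} [p.IsPrime] (hp : p ≠ maximalIdeal A) :
    ∃ x ∈ maximalIdeal A, x ∉ p :=
  SetLike.exists_of_lt ((le_maximalIdeal_of_isPrime p).lt_of_ne hp)

theorem isSimpleModule_or_exists_isSMulRegular {N : Type w} [AddCommGroup N] [Module A N]
    (p : Ideal A) [p.IsPrime] (e : N ≃ₗ[A] A ⧸ p) :
    IsSimpleModule A N ∨ ∃ x ∈ maximalIdeal A, IsSMulRegular N x := by
  obtain rfl | hp := eq_or_ne p (maximalIdeal A)
  · have : IsSimpleModule A (A ⧸ maximalIdeal A) :=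
      isSimpleModule_iff_isCoatom.2 (maximalIdeal.isMaximal A).out
    exact .inl (.congr e)
  · obtain ⟨x, hx, hxp⟩ := exists_mem_maximalIdeal_notMem hp
    exact .inr ⟨x, hx, (e.isSMulRegular_congr x).2 (isSMulRegular_quotient_of_notMem hxp)⟩

theorem ofList_le_maximalIdeal {M : Type w} [AddCommGroup M] [Module A M] {rs : List A}
    (reg : IsRegular M rs) : Ideal.ofList rs ≤ maximalIdeal A := by
  refine le_maximalIdeal fun h ↦ reg.top_ne_smul ?_
  rw [h, Submodule.top_smul]

variable [IsNoetherianRing A]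

theorem length_le_ringKrullDim_of_isRegular {M : Type w} [AddCommGroup M] [Module A M]
    [Module.Finite A M] {rs : List A} (reg : IsRegular M rs) : rs.length ≤ ringKrullDim A := by
  have : Nontrivial (M ⧸ (Ideal.ofList rs • ⊤ : Submodule A M)) :=
    Submodule.Quotient.nontrivial_iff.2 reg.top_ne_smul.symm
  calc (rs.length : WithBot ℕ∞)
      ≤ Module.supportDim A (M ⧸ (Ideal.ofList rs • ⊤ : Submodule A M)) + rs.length :=
        le_add_of_nonneg_left (supportDim_nonneg A _)
    _ = Module.supportDim A M := Module.supportDim_add_length_eq_supportDim_of_isRegular rs reg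
    _ ≤ ringKrullDim A := Module.supportDim_le_ringKrullDim A M

theorem exists_maximalFor_isRegular_length (M : Type w) [AddCommGroup M] [Module A M]
    [Module.Finite A M] [Nontrivial M] :
    ∃ rs : List A, MaximalFor (IsRegular M) List.length rs := by
  obtain ⟨d, hd⟩ : ∃ d : ℕ, ringKrullDim A = d :=
    ⟨_, Order.krullDim_eq_length_of_finiteDimensionalOrder⟩
  refine Set.Finite.exists_maximalFor' List.length {rs | IsRegular M rs} ?_ ⟨[], .nil A M⟩
  refine (Set.finite_Iic d).subset ?_
  rintro _ ⟨rs, reg, rfl⟩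
  exact_mod_cast (length_le_ringKrullDim_of_isRegular reg).trans_eq hd

theorem exists_injective_of_isSimpleModule {M : Type w} [AddCommGroup M] [Module A M]
    [Module.Finite A M] {rs : List A} (hrs : MaximalFor (IsRegular M) List.length rs)
    (K : Type w') [AddCommGroup K] [Module A K] [IsSimpleModule A K] :
    ∃ f : K →ₗ[A] M ⧸ (Ideal.ofList rs • ⊤ : Submodule A M), Function.Injective f := by
  by_contra! h
  have : Subsingleton (K →ₗ[A] M ⧸ (Ideal.ofList rs • ⊤ : Submodule A M)) :=
    subsingleton_of_forall_eq 0 fun f ↦ f.injective_or_eq_zero.resolve_left (h f)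
  obtain ⟨x, hx, hxr⟩ := IsSMulRegular.subsingleton_linearMap_iff.1 this
  rw [annihilator_eq_maximalIdeal] at hx
  have hweak : IsWeaklyRegular M (rs ++ [x]) := by
    rw [isWeaklyRegular_append_iff, isWeaklyRegular_singleton_iff]
    exact ⟨hrs.prop.1, hxr⟩
  have hmem : ∀ r ∈ rs ++ [x], r ∈ maximalIdeal A := List.forall_mem_append.2
    ⟨fun r hr ↦ ofList_le_maximalIdeal hrs.prop (Ideal.subset_span hr),
      List.forall_mem_singleton.2 hx⟩
  have : Nontrivial M := hrs.prop.nontrivial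
  simpa using hrs.le (IsRegular.of_isWeaklyRegular_of_mem_maximalIdeal M hmem hweak)

theorem ringKrullDim_eq_length_of_isRegular {rs : List A} (reg : IsRegular A rs)
    (h : ∀ p : Ideal A, p.IsPrime → Ideal.ofList rs ≤ p → p = maximalIdeal A) :
    ringKrullDim A = rs.length := by
  have : Subsingleton (PrimeSpectrum.zeroLocus (Ideal.ofList rs : Set A)) := by
    refine ⟨fun p q ↦ Subtype.ext (PrimeSpectrum.ext ?_)⟩
    rw [h _ p.1.2 p.2, h _ q.1.2 q.2]
  have : Nonempty (PrimeSpectrum.zeroLocus (Ideal.ofList rs : Set A)) :=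
    ⟨closedPoint A, ofList_le_maximalIdeal reg⟩
  rw [← ringKrullDim_add_length_eq_ringKrullDim_of_isRegular rs reg, ringKrullDim_quotient,
    Order.krullDim_eq_zero, zero_add]

theorem hasProjectiveDimensionLT_quotient_of_isRegular {rs : List A} (reg : IsRegular A rs) :
    HasProjectiveDimensionLT (ModuleCat.of A (A ⧸ (Ideal.ofList rs • ⊤ : Submodule A A)))
      (rs.length + 1) := by
  have projDim_eq := ModuleCat.projectiveDimension_quotient_eq_add_length_of_isWeaklyRegular
    (ModuleCat.of A A) rs reg.1 fun _ hr ↦ ofList_le_maximalIdeal reg (Ideal.subset_span hr)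
  rw [ModuleCat.projectiveDimension_eq_zero_of_projective (.of A A), zero_add] at projDim_eq
  rw [← projectiveDimension_lt_iff]
  refine projDim_eq.trans_lt ?_
  exact_mod_cast rs.length.lt_succ_self

end IsLocalRing

section Ext

variable {A : Type v} [CommRing A] [IsLocalRing A] [IsNoetherianRing A] [Small.{w} A]
  {M : ModuleCat.{w} A} [Module.Finite A M]

theorem subsingleton_ext_of_isSimpleModule {n : ℕ}
    (hK : ∀ K : ModuleCat.{w} A, IsSimpleModule A K → Subsingleton (Ext K M n))
    (N : ModuleCat.{w} A) [hN : Module.Finite A N]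
    (hlt : ∀ N' : ModuleCat.{w} A, Module.Finite A N' →
      Module.supportDim A N' + 1 ≤ Module.supportDim A N → Subsingleton (Ext N' M (n + 1))) :
    Subsingleton (Ext N M n) := by
  generalize hd : Module.supportDim A N = d at hlt
  replace hd := hd.le
  revert hd
  refine IsNoetherianRing.induction_on_isQuotientEquivQuotientPrime A hN
    (motive := fun N _ _ _ ↦ Module.supportDim A N ≤ d → Subsingleton (Ext (.of A N) M n))
    (fun N _ _ _ _ _ ↦ ?_) (fun N _ _ _ p e hd ↦ ?_)
    (fun N₁ _ _ _ N₂ _ _ _ N₃ _ _ _ f g hf hg hfg ih₁ ih₃ hd ↦ ?_)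
  · exact subsingleton_ext_of_isZero (ModuleCat.isZero_of_subsingleton (.of A N)) M n
  · obtain _ | ⟨x, hx, reg⟩ := isSimpleModule_or_exists_isSMulRegular p.1 e
    · exact hK (.of A N) ‹_›
    · exact subsingleton_ext_of_quotSMulTop (N := .of A N) reg
        (maximalIdeal_le_jacobson _ hx) <| hlt _ inferInstance <|
        (Module.supportDim_quotSMulTop_succ_eq_supportDim reg hx).trans_le hd
  · exact subsingleton_ext_X₂ (ModuleCat.shortComplex_shortExact
        (ModuleCat.shortComplexOfCompEqZero f g hfg.linearMap_comp_eq_zero) hfg hf hg)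
      (ih₁ ((Module.supportDim_le_of_injective f hf).trans hd))
      (ih₃ ((Module.supportDim_le_of_surjective g hg).trans hd))

theorem subsingleton_ext_of_add_supportDim_lt {rs : List A} (reg : IsRegular M rs)
    (N : ModuleCat.{w} A) [Module.Finite A N] (n : ℕ)
    (h : n + Module.supportDim A N < rs.length) : Subsingleton (Ext N M n) := by
  cases subsingleton_or_nontrivial N with
  | inl _ => exact subsingleton_ext_of_isZero (ModuleCat.isZero_of_subsingleton N) M n
  | inr _ =>
    have hn : n < rs.length := by
      exact_mod_cast (le_add_of_nonneg_right (supportDim_nonneg A N)).trans_lt h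
    refine subsingleton_ext_of_isSimpleModule (fun K _ ↦ ?_) N fun N' _ hN' ↦
      subsingleton_ext_of_add_supportDim_lt reg N' (n + 1) ?_
    · refine subsingleton_ext_of_ofList_le_annihilator reg ?_ hn
      rw [annihilator_eq_maximalIdeal]
      exact ofList_le_maximalIdeal reg
    · calc ((n + 1 : ℕ) : WithBot ℕ∞) + Module.supportDim A N'
          = n + (Module.supportDim A N' + 1) := by push_cast; ac_rfl
        _ ≤ n + Module.supportDim A N := by gcongr
        _ < rs.length := h
termination_by rs.length - n

theorem subsingleton_ext_of_injective_of_hasProjectiveDimensionLT {P : ModuleCat.{w} A}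
    [Module.Finite A P] {m n : ℕ} [HasProjectiveDimensionLT P m] [HasInjectiveDimensionLT M n]
    (hP : ∀ K : ModuleCat.{w} A, IsSimpleModule A K → ∃ f : K →ₗ[A] P, Function.Injective f)
    (i : ℕ) (hi : m ≤ i) (N : ModuleCat.{w} A) [Module.Finite A N] :
    Subsingleton (Ext N M i) := by
  by_cases hin : n ≤ i
  · exact HasInjectiveDimensionLT.subsingleton M n i hin N
  have ih (N' : ModuleCat.{w} A) (_ : Module.Finite A N') : Subsingleton (Ext N' M (i + 1)) :=
    subsingleton_ext_of_injective_of_hasProjectiveDimensionLT (m := m) (n := n) hP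
      (i + 1) (by lia) N'
  refine subsingleton_ext_of_isSimpleModule (fun K hK ↦ ?_) N fun N' hN' _ ↦ ih N' hN'
  obtain ⟨f, hf⟩ := hP K hK
  exact subsingleton_ext_X₁ (ModuleCat.shortComplex_shortExact
      (ModuleCat.shortComplexOfCompEqZero f f.range.mkQ f.range_mkQ_comp)
      f.exact_map_mkQ_range hf f.range.mkQ_surjective)
    (HasProjectiveDimensionLT.subsingleton P m i hi M) (ih _ inferInstance)
termination_by n - i

theorem eq_maximalIdeal_of_ofList_le {rs : List A}
    (hrs : MaximalFor (IsRegular M) List.length rs)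
    (h : ∀ N : ModuleCat.{w} A, Module.Finite A N → Subsingleton (Ext N M (rs.length + 1)))
    {p : Ideal A} [p.IsPrime] (hrsp : Ideal.ofList rs ≤ p) : p = maximalIdeal A := by
  by_contra hpm
  obtain ⟨x, hx, hxp⟩ := exists_mem_maximalIdeal_notMem hpm
  let e : Shrink.{w} (A ⧸ p) ≃ₗ[A] A ⧸ p := Shrink.linearEquiv A _
  let N : ModuleCat.{w} A := .of A (Shrink.{w} (A ⧸ p))
  have annihilator_eq : Module.annihilator A N = p :=
    e.annihilator_eq.trans Ideal.annihilator_quotient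
  have : Module.Finite A N := .equiv e.symm
  have reg : IsSMulRegular N x := (e.isSMulRegular_congr x).2 (isSMulRegular_quotient_of_notMem hxp)
  have ext_eq_zero (i : ℕ) (hi : i < rs.length + 1) : Subsingleton (Ext N M i) := by
    obtain hi | rfl := Nat.lt_succ_iff_lt_or_eq.1 hi
    · exact subsingleton_ext_of_ofList_le_annihilator hrs.prop
        (hrsp.trans_eq annihilator_eq.symm) hi
    · exact subsingleton_ext_of_quotSMulTop reg (maximalIdeal_le_jacobson _ hx) (h _ inferInstance)
  have : Nontrivial M := hrs.prop.nontrivial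
  have smul_ne_top : p • (⊤ : Submodule A M) ≠ ⊤ :=
    (Submodule.top_ne_ideal_smul_of_le_jacobson_annihilator
      ((le_maximalIdeal_of_isPrime p).trans (maximalIdeal_le_jacobson _))).symm
  obtain ⟨rs', hlen, -, reg'⟩ := ModuleCat.exists_isRegular_of_exists_subsingleton_ext p
    (rs.length + 1) M smul_ne_top.lt_top N
    (by rw [Module.support_eq_zeroLocus, annihilator_eq]) ext_eq_zero
  have := hrs.le reg'
  lia

end Ext

theorem exists_isRegular_length_eq_ringKrullDim (A : Type v) [CommRing A] [IsLocalRing A]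
    [IsNoetherianRing A] (n : ℕ) [HasInjectiveDimensionLT (ModuleCat.of A A) n] :
    ∃ rs : List A, IsRegular A rs ∧ rs.length = ringKrullDim A := by
  obtain ⟨rs, hrs⟩ := exists_maximalFor_isRegular_length (A := A) A
  have := hasProjectiveDimensionLT_quotient_of_isRegular hrs.prop
  refine ⟨rs, hrs.prop, (ringKrullDim_eq_length_of_isRegular hrs.prop fun p _ ↦ ?_).symm⟩
  exact eq_maximalIdeal_of_ofList_le (M := .of A A) hrs fun N _ ↦
    subsingleton_ext_of_injective_of_hasProjectiveDimensionLT (n := n)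
      (P := .of A (A ⧸ (Ideal.ofList rs • ⊤ : Submodule A A)))
      (fun K _ ↦ exists_injective_of_isSimpleModule hrs K) _ le_rfl N

theorem HasFiniteSelfInjDim.exists_hasInjectiveDimensionLT {A : Type u} [CommRing A]
    (h : HasFiniteSelfInjDim A) : ∃ n, HasInjectiveDimensionLT (ModuleCat.of A A) n := by
  obtain ⟨n, hn⟩ := h
  refine ⟨n + 1, .mk fun i hi X ↦ ?_⟩
  have := (subsingleton_derivedExt_iff A X (.of A A) i).1 (hn X i hi)
  exact fun y ↦ Subsingleton.elim y 0

theorem stmt10 (A : Type u) [CommRing A] [IsNoetherianRing A] [IsLocalRing A]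
    (hGor : HasFiniteSelfInjDim A) (d : ℕ) (hd : ringKrullDim A = d)
    (N : Type u) [AddCommGroup N] [Module A N] [Module.Finite A N] [Nontrivial N]
    (e : ℕ) (he : ringKrullDim (A ⧸ Module.annihilator A N) = e) :
    ∀ v : ℕ, v + e < d → Subsingleton (extPow A N v) := by
  intro v hv
  obtain ⟨n, _⟩ := hGor.exists_hasInjectiveDimensionLT
  obtain ⟨rs, reg, hrs⟩ := exists_isRegular_length_eq_ringKrullDim A n
  refine (subsingleton_derivedExt_iff A _ _ v).2
    (subsingleton_ext_of_add_supportDim_lt (M := .of A A) reg (.of A N) v ?_)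
  rw [Module.supportDim_eq_ringKrullDim_quotient_annihilator, he, hrs, hd]
  exact_mod_cast hv

end
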